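/- The Lebesgue constant for polynomial interpolation at m ≥ 2 Chebyshev (Clenshaw-Curtis) points satisfies Λ_m ≤ (2/π) log(m - 1) + 1. -/

import Mathlib

open Real

theorem add_cube_div_three_le_tan {t : ℝ} (ht : 0 ≤ t) (ht' : t < π / 2) :
    t + t ^ 3 / 3 ≤ tan t := by
  have hcos {y : ℝ} (hy : y ∈ Set.Ico 0 (π / 2)) : cos y ≠ 0 :=
    (cos_pos_of_mem_Ioo ⟨by linarith [hy.1, pi_pos], hy.2⟩).ne'
  have key : MonotoneOn (fun y : ℝ => tan y - (y + y ^ 3 / 3)) (Set.Ico 0 (π / 2)) := by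
    have hd {y : ℝ} (hy : y ∈ Set.Ico 0 (π / 2)) :
        HasDerivAt (fun y : ℝ => tan y - (y + y ^ 3 / 3)) (1 / cos y ^ 2 - (1 + y ^ 2)) y := by
      convert! (hasDerivAt_tan (hcos hy)).sub
        ((hasDerivAt_id y).add ((hasDerivAt_pow 3 y).div_const 3)) using 1
      push_cast
      ring
    refine monotoneOn_of_deriv_nonneg (convex_Ico _ _)
      (fun y hy => (hd hy).continuousAt.continuousWithinAt)
      (fun y hy => (hd (interior_subset hy)).differentiableAt.differentiableWithinAt) fun y hy => ?_
    have hy := interior_subset hy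
    rw [(hd hy).deriv]
    have h1 : y ≤ tan y := le_tan hy.1 hy.2
    have h2 : 1 / cos y ^ 2 = 1 + tan y ^ 2 := by
      rw [tan_eq_sin_div_cos]
      have := hcos hy
      field_simp
      linarith [sin_sq_add_cos_sq y]
    rw [h2]
    nlinarith [hy.1]
  have := key (a := 0) ⟨le_rfl, by positivity⟩ ⟨ht, ht'⟩ ht
  norm_num at this
  linarith

/-- A form of Wilker's inequality. -/
theorem two_mul_le_sin_sq_div_add_tan {t : ℝ} (ht : 0 < t) (ht' : t < π / 2) :
    2 * t ≤ sin t ^ 2 / t + tan t := by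
  have h1 := sin_ge_sub_cube ht.le
  have h2 := add_cube_div_three_le_tan ht.le ht'
  have h3 : t ^ 2 ≤ 6 := by nlinarith [pi_lt_d2]
  have h4 : t - t ^ 3 / 3 ≤ sin t ^ 2 / t := by
    rw [le_div_iff₀ ht]
    have : 0 ≤ t - t ^ 3 / 6 := by nlinarith
    nlinarith [pow_le_pow_left₀ this h1 2, pow_pos ht 6]
  linarith

theorem log_sub_log_sin_add_mul_cot_le {h : ℝ} (h0 : 0 < h) (h1 : h ≤ π / 2) :
    log h - log (sin h) + h * cot (h / 2) ≤ log (π / 2) + π / 2 := by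
  have hs {y : ℝ} (hy : y ∈ Set.Ioc 0 (π / 2)) : 0 < sin y :=
    sin_pos_of_pos_of_lt_pi hy.1 (by linarith [hy.2, pi_pos])
  have hs2 {y : ℝ} (hy : y ∈ Set.Ioc 0 (π / 2)) : 0 < sin (y / 2) :=
    sin_pos_of_pos_of_lt_pi (by linarith [hy.1]) (by linarith [hy.2, pi_pos])
  have key : MonotoneOn (fun y : ℝ => log y - log (sin y) + y * (cos (y / 2) / sin (y / 2)))
      (Set.Ioc 0 (π / 2)) := by
    have hd {y : ℝ} (hy : y ∈ Set.Ioc 0 (π / 2)) :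
        HasDerivAt (fun y : ℝ => log y - log (sin y) + y * (cos (y / 2) / sin (y / 2)))
        (1 / y - cos y / sin y + (cos (y / 2) / sin (y / 2) - y / 2 / sin (y / 2) ^ 2)) y := by
      have e1 := (hasDerivAt_id y).div_const 2
      have e2 := (e1.cos.div e1.sin (hs2 hy).ne')
      convert! ((hasDerivAt_log hy.1.ne').sub ((hasDerivAt_sin y).log (hs hy).ne')).add
        ((hasDerivAt_id y).mul e2) using 1
      have := (hs2 hy).ne'
      simp only [id, Pi.div_apply]
      field_simp
      linear_combination y * sin_sq_add_cos_sq (y / 2)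
    refine monotoneOn_of_deriv_nonneg (convex_Ioc _ _)
      (fun y hy => (hd hy).continuousAt.continuousWithinAt)
      (fun y hy => (hd (interior_subset hy)).differentiableAt.differentiableWithinAt) fun y hy => ?_
    have hy := interior_subset hy
    rw [(hd hy).deriv]
    obtain ⟨t, rfl⟩ : ∃ t, y = 2 * t := ⟨y / 2, by ring⟩
    have ht : 0 < t := by linarith [hy.1]
    have ht' : t < π / 2 := by linarith [hy.2]
    have hw := two_mul_le_sin_sq_div_add_tan ht ht'
    have hst : 0 < sin t := by simpa using hs2 hy
    have hct : 0 < cos t := cos_pos_of_mem_Ioo ⟨by linarith, ht'⟩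
    rw [show 2 * t / 2 = t by ring, sin_two_mul, cos_two_mul]
    have : 1 / (2 * t) - (2 * cos t ^ 2 - 1) / (2 * sin t * cos t) +
        (cos t / sin t - t / sin t ^ 2) =
        (sin t ^ 2 / t + tan t - 2 * t) / (2 * sin t ^ 2) := by
      rw [tan_eq_sin_div_cos]
      field_simp
      ring
    rw [this]
    have : 0 ≤ sin t ^ 2 / t + tan t - 2 * t := by linarith
    positivity
  have := key ⟨h0, h1⟩ ⟨by positivity, le_rfl⟩ h1
  rw [cot_eq_cos_div_sin]
  refine this.trans (le_of_eq ?_)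
  simp only [sin_pi_div_two, log_one, show π / 2 / 2 = π / 4 by ring, cos_pi_div_four,
    sin_pi_div_four]
  rw [div_self (by positivity)]
  ring

theorem two_mul_mul_cot_le_log_sub_log {c d : ℝ} (hd : 0 ≤ d) (hdc : d < c) (hcd : c + d ≤ π / 2) :
    2 * d * cot c ≤ log (sin (c + d)) - log (sin (c - d)) := by
  have hc : 0 < sin c := sin_pos_of_pos_of_lt_pi (by linarith) (by linarith [pi_pos])
  have hm : 0 < sin (c - d) := sin_pos_of_pos_of_lt_pi (by linarith) (by linarith [pi_pos])
  have hp : 0 < sin (c + d) := sin_pos_of_pos_of_lt_pi (by linarith) (by linarith [pi_pos])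
  have hcc : 0 ≤ cos c := cos_nonneg_of_mem_Icc ⟨by linarith [pi_pos], by linarith⟩
  have hcd' : 0 < cos d := cos_pos_of_mem_Ioo ⟨by linarith [pi_pos], by linarith [pi_pos]⟩
  have hsd : 0 ≤ sin d := sin_nonneg_of_nonneg_of_le_pi hd (by linarith [pi_pos])
  have htan : d ≤ tan d := le_tan hd (by linarith)
  have hx : 0 ≤ 2 * (cos c * sin d) / sin (c - d) := by positivity
  have hl := le_log_one_add_of_nonneg hx
  have e1 : 1 + 2 * (cos c * sin d) / sin (c - d) = sin (c + d) / sin (c - d) := by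
    field_simp
    rw [sin_add, sin_sub]
    ring
  have e2 : 2 * (2 * (cos c * sin d) / sin (c - d)) / (2 * (cos c * sin d) / sin (c - d) + 2) =
      2 * tan d * cot c := by
    rw [tan_eq_sin_div_cos, cot_eq_cos_div_sin]
    have : 2 * (cos c * sin d) / sin (c - d) + 2 = 2 * (sin c * cos d) / sin (c - d) := by
      field_simp
      rw [sin_sub]
      ring
    rw [this]
    field_simp
  rw [e1, e2, log_div hp.ne' hm.ne'] at hl
  refine le_trans ?_ hl
  have : 0 ≤ cot c := by rw [cot_eq_cos_div_sin]; positivity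
  gcongr

theorem sum_cot_le (n : ℕ) (hn : 0 < n) :
    (1 / n : ℝ) * ∑ j ∈ Finset.range n, cot ((2 * j + 1) * (π / (2 * n)) / 2) ≤
      2 / π * log n + 1 := by
  have hn' : (1 : ℝ) ≤ n := by exact_mod_cast hn
  set h : ℝ := π / (2 * n) with hh
  have hnh : n * h = π / 2 := by rw [hh]; field_simp
  have h0 : 0 < h := by positivity
  have h1 : h ≤ π / 2 := by nlinarith
  have hlog : log (π / 2) = log n + log h := by
    rw [← hnh, log_mul (by positivity) h0.ne']
  have tel (k : ℕ) (hk : k < n) : h * ∑ j ∈ Finset.range k, cot ((2 * (j + 1 : ℕ) + 1) * h / 2) ≤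
      log (sin ((k + 1) * h)) - log (sin h) := by
    induction k with
    | zero => simp
    | succ k ih =>
      have ih := ih (by omega)
      have hk' : (k + 1 + 1 : ℝ) ≤ n := by exact_mod_cast hk
      have := two_mul_mul_cot_le_log_sub_log (c := (2 * (k + 1 : ℕ) + 1) * h / 2) (d := h / 2)
        (by positivity) (by push_cast; nlinarith [(k.cast_nonneg : (0 : ℝ) ≤ k)])
        (by push_cast; nlinarith)
      rw [Finset.sum_range_succ, mul_add]
      have e1 : (2 * (k + 1 : ℕ) + 1) * h / 2 + h / 2 = ((k + 1 : ℕ) + 1) * h := by push_cast; ring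
      have e2 : (2 * (k + 1 : ℕ) + 1) * h / 2 - h / 2 = (k + 1) * h := by push_cast; ring
      rw [e1, e2] at this
      linarith
  obtain ⟨k, rfl⟩ : ∃ k, n = k + 1 := ⟨n - 1, by omega⟩
  have ht := tel k (by omega)
  have e : ((k : ℝ) + 1) * h = π / 2 := by exact_mod_cast hnh
  rw [e, sin_pi_div_two, log_one] at ht
  have hb := log_sub_log_sin_add_mul_cot_le h0 h1
  rw [Finset.sum_range_succ']
  have e3 : (1 / (k + 1 : ℕ) : ℝ) = 2 / π * h := by
    rw [hh]; field_simp
  have e4 : (2 * ((0 : ℕ) : ℝ) + 1) * h / 2 = h / 2 := by simp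
  rw [e3, e4, mul_assoc]
  have : h * (∑ j ∈ Finset.range k, cot ((2 * (j + 1 : ℕ) + 1) * h / 2) + cot (h / 2)) ≤
      log (k + 1 : ℕ) + π / 2 := by linarith
  calc _ ≤ 2 / π * (log (k + 1 : ℕ) + π / 2) := by gcongr
    _ = _ := by field_simp
theorem sin_nat_mul_mul_sin_le {t τ : ℝ} (ht : 0 ≤ t) (htτ : t ≤ τ) (n : ℕ) (hn : n * τ ≤ π / 2) :
    sin (n * τ) * sin t ≤ sin (n * t) * sin τ := by
  induction n with
  | zero => simp
  | succ n ih =>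
    push_cast at hn ⊢
    have hnτ : 0 ≤ (n : ℝ) * τ := by positivity [ht.trans htτ]
    have hnt : (n : ℝ) * t ≤ n * τ := by gcongr
    have hnt0 : 0 ≤ (n : ℝ) * t := by positivity
    have ih := ih (by linarith)
    have hst : 0 ≤ sin t := sin_nonneg_of_nonneg_of_le_pi ht (by linarith [pi_pos])
    have hsτ : 0 ≤ sin τ := sin_nonneg_of_nonneg_of_le_pi (by linarith) (by linarith [pi_pos])
    have hsnτ : 0 ≤ sin (n * τ) := sin_nonneg_of_nonneg_of_le_pi hnτ (by linarith [pi_pos])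
    have hct : 0 ≤ cos t := cos_nonneg_of_mem_Icc ⟨by linarith [pi_pos], by linarith⟩
    have hc1 : cos τ ≤ cos t := cos_le_cos_of_nonneg_of_le_pi ht (by linarith [pi_pos]) htτ
    have hc2 : cos (n * τ) ≤ cos (n * t) :=
      cos_le_cos_of_nonneg_of_le_pi hnt0 (by linarith [pi_pos]) hnt
    rw [add_mul, add_mul, one_mul, one_mul, sin_add, sin_add]
    calc _ = sin (n * τ) * sin t * cos τ + cos (n * τ) * (sin τ * sin t) := by ring
      _ ≤ sin (n * τ) * sin t * cos t + cos (n * t) * (sin τ * sin t) := by gcongr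
      _ ≤ sin (n * t) * sin τ * cos t + cos (n * t) * (sin τ * sin t) := by gcongr
      _ = _ := by ring

theorem one_sub_cos_le_mul {n : ℕ} {h u : ℝ} (hnh : n * h = π / 2) (hn : 0 < n) (hu : |u| ≤ h) :
    1 - cos u ≤ (1 - cos h) * (1 - cos (n * u)) := by
  have hn' : (1 : ℝ) ≤ n := by exact_mod_cast hn
  have hu0 := abs_nonneg u
  have hh : h ≤ π / 2 := by nlinarith
  have key := sin_nat_mul_mul_sin_le (t := |u| / 2) (τ := h / 2) (by positivity) (by linarith) n
    (by linarith [pi_pos])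
  rw [show n * (h / 2) = π / 4 by linarith, sin_pi_div_four] at key
  have hs : 0 ≤ sin (|u| / 2) := sin_nonneg_of_nonneg_of_le_pi (by linarith) (by linarith [pi_pos])
  have key2 := pow_le_pow_left₀ (by positivity) key 2
  have half (y : ℝ) : 1 - cos y = 2 * sin (y / 2) ^ 2 := by
    have := cos_sq (y / 2)
    rw [mul_div_cancel₀ y two_ne_zero] at this
    linarith [sin_sq_add_cos_sq (y / 2)]
  have e : cos (n * u) = cos (n * |u|) := by
    rw [← cos_abs (n * u), abs_mul, Nat.abs_cast]
  rw [e, ← cos_abs u, half, half, half, show n * |u| / 2 = n * (|u| / 2) by ring]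
  rw [mul_pow, mul_pow, div_pow, sq_sqrt (by norm_num)] at key2
  nlinarith

theorem cot_add_cot {a b : ℝ} (ha : sin a ≠ 0) (hb : sin b ≠ 0) :
    cot a + cot b = sin (a + b) / (sin a * sin b) := by
  rw [cot_eq_cos_div_sin, cot_eq_cos_div_sin, sin_add]
  field_simp
  ring

theorem sin_mul_cot_add_cot_le {n j : ℕ} {h s : ℝ} (hnh : n * h = π / 2) (hj : j < n)
    (hs : s ∈ Set.Ioo 0 1) :
    sin (s * π) / 2 * (cot ((j + s) * h) + cot ((j + (1 - s)) * h)) ≤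
      cot ((2 * j + 1) * h / 2) := by
  have hn : 0 < n := by omega
  have hn' : (0 : ℝ) < n := by exact_mod_cast hn
  have hj' : (j + 1 : ℝ) ≤ n := by exact_mod_cast hj
  have hj0 : (0 : ℝ) ≤ j := j.cast_nonneg
  obtain ⟨hs0, hs1⟩ := hs
  have h0 : 0 < h := by
    by_contra! hc
    nlinarith [pi_pos]
  have hp : (j + 1) * h ≤ π / 2 := by nlinarith
  set A := (j + s) * h with hA
  set B := (j + (1 - s)) * h with hB
  have hAB : (2 * j + 1) * h / 2 = (A + B) / 2 := by rw [hA, hB]; ring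
  have hA0 : 0 < A := by positivity
  have hB0 : 0 < B := by have : 0 < 1 - s := by linarith
                         positivity
  have hA1 : A < π / 2 := by nlinarith
  have hB1 : B < π / 2 := by nlinarith
  have hsA : 0 < sin A := sin_pos_of_pos_of_lt_pi hA0 (by linarith)
  have hsB : 0 < sin B := sin_pos_of_pos_of_lt_pi hB0 (by linarith)
  have hsC : 0 < sin ((A + B) / 2) := sin_pos_of_pos_of_lt_pi (by linarith) (by linarith)
  have hcC : 0 < cos ((A + B) / 2) := cos_pos_of_mem_Ioo ⟨by linarith, by linarith⟩
  have hu : |A - B| ≤ h := by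
    rw [abs_le]; constructor <;> nlinarith
  have k1 := one_sub_cos_le_mul hnh hn hu
  have e1 : cos (n * (A - B)) = sin (s * π) := by
    rw [← cos_pi_div_two_sub, ← cos_neg]
    congr 1
    rw [hA, hB]
    linear_combination (1 - 2 * s) * hnh
  have k2 : cos (A + B) ≤ cos h :=
    cos_le_cos_of_nonneg_of_le_pi h0.le (by linarith) (by rw [hA, hB]; nlinarith)
  have k3 : sin (s * π) * (1 - cos (A + B)) ≤ cos (A - B) - cos (A + B) := by
    rw [e1] at k1
    nlinarith [sin_le_one (s * π)]
  have e2 : cos (A - B) - cos (A + B) = 2 * (sin A * sin B) := by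
    rw [cos_add, cos_sub]; ring
  have e3 : 1 - cos (A + B) = 2 * sin ((A + B) / 2) ^ 2 := by
    have := cos_two_mul ((A + B) / 2)
    rw [mul_div_cancel₀ _ two_ne_zero] at this
    linarith [sin_sq_add_cos_sq ((A + B) / 2)]
  have e4 : sin (A + B) = 2 * sin ((A + B) / 2) * cos ((A + B) / 2) := by
    rw [← sin_two_mul, mul_div_cancel₀ _ two_ne_zero]
  rw [hAB, cot_add_cot hsA.ne' hsB.ne', cot_eq_cos_div_sin, e4, le_div_iff₀ hsC]
  rw [e2, e3] at k3
  have k4 : sin (s * π) * sin ((A + B) / 2) ^ 2 / (sin A * sin B) ≤ 1 := by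
    rw [div_le_one (by positivity)]
    linarith
  calc _ = cos ((A + B) / 2) * (sin (s * π) * sin ((A + B) / 2) ^ 2 / (sin A * sin B)) := by
        field_simp
    _ ≤ cos ((A + B) / 2) * 1 := by gcongr
    _ = _ := mul_one _

theorem sum_range_odd_eq (f : ℕ → ℝ) (p : ℕ) :
    f p + ∑ k ∈ Finset.range p, (f (p - (k + 1)) + f (p + (k + 1))) =
      ∑ j ∈ Finset.range (2 * p + 1), f j := by
  rw [show 2 * p + 1 = p + (p + 1) by ring, Finset.sum_range_add, Finset.sum_range_succ',
    Finset.sum_add_distrib, ← Finset.sum_range_reflect f]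
  simp only [Nat.sub_sub, add_comm 1, add_zero]
  ring

theorem sum_range_div_cos_sub_cos_eq {h s : ℝ} (h0 : 0 < h) (hs : 0 < s) (p : ℕ)
    (hp : (p + s) * h < π / 2) :
    ∑ k ∈ Finset.range (p + 1), (if k = 0 then 1 / 2 else 1) *
      (sin (2 * (p + s) * h) / |cos (2 * k * h) - cos (2 * (p + s) * h)|) =
    1 / 2 * ∑ j ∈ Finset.range (2 * p + 1), cot ((j + s) * h) := by
  have hp0 : 0 < (p + s) * h := by positivity
  have hsp : 0 < sin ((p + s) * h) := sin_pos_of_pos_of_lt_pi hp0 (by linarith)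
  have hdouble : sin (2 * (p + s) * h) = 2 * sin ((p + s) * h) * cos ((p + s) * h) := by
    rw [← sin_two_mul]; ring_nf
  rw [← sum_range_odd_eq, Finset.sum_range_succ', add_comm, mul_add (1 / 2 : ℝ), Finset.mul_sum]
  congr 1
  · have : cos (2 * (0 : ℕ) * h) - cos (2 * (p + s) * h) = 2 * sin ((p + s) * h) ^ 2 := by
      rw [show 2 * (p + s) * h = 2 * ((p + s) * h) by ring, cos_two_mul]
      simp only [Nat.cast_zero, mul_zero, zero_mul, cos_zero]
      linarith [sin_sq_add_cos_sq ((p + s) * h)]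
    rw [this, abs_of_pos (by positivity), hdouble, cot_eq_cos_div_sin]
    simp only [if_true]
    field_simp
  · refine Finset.sum_congr rfl fun k hk => ?_
    have hk : k + 1 ≤ p := Finset.mem_range.1 hk
    have hk' : (k + 1 : ℝ) ≤ p := by exact_mod_cast hk
    have hk0 : (0 : ℝ) ≤ k := k.cast_nonneg
    rw [if_neg (by omega), one_mul]
    push_cast [Nat.cast_sub hk]
    have hA : 0 < sin ((p - (k + 1) + s) * h) :=
      sin_pos_of_pos_of_lt_pi (by apply mul_pos _ h0; linarith) (by nlinarith)
    have hB : 0 < sin ((p + (k + 1) + s) * h) :=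
      sin_pos_of_pos_of_lt_pi (by positivity) (by nlinarith)
    rw [cot_add_cot hA.ne' hB.ne']
    have e : cos (2 * (k + 1) * h) - cos (2 * (p + s) * h) =
        2 * (sin ((p - (k + 1) + s) * h) * sin ((p + (k + 1) + s) * h)) := by
      have e1 : 2 * (k + 1) * h = (p + (k + 1) + s) * h - (p - (k + 1) + s) * h := by ring
      have e2 : 2 * (p + s) * h = (p + (k + 1) + s) * h + (p - (k + 1) + s) * h := by ring
      rw [e1, e2, cos_add, cos_sub]
      ring
    have e3 : (p - (k + 1) + s) * h + (p + (k + 1) + s) * h = 2 * (p + s) * h := by ring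
    rw [e, abs_of_pos (by positivity), e3]
    field_simp

theorem sum_range_cot_le {n p : ℕ} {h s : ℝ} (hnh : n * h = π / 2) (hs : s ∈ Set.Ioo 0 1)
    (hp : p < n) :
    ∑ j ∈ Finset.range (2 * p + 1), cot ((j + s) * h) ≤
      ∑ j ∈ Finset.range n, cot ((j + s) * h) := by
  obtain ⟨hs0, hs1⟩ := hs
  have hn' : (0 : ℝ) < n := by exact_mod_cast (by omega : 0 < n)
  have h0 : 0 < h := by
    by_contra! hc
    nlinarith [pi_pos]
  rcases le_total (2 * p + 1) n with hpn | hpn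
  · refine Finset.sum_le_sum_of_subset_of_nonneg (Finset.range_subset_range.2 hpn) fun j hj _ => ?_
    have hj' : (j + 1 : ℝ) ≤ n := by exact_mod_cast Finset.mem_range.1 hj
    have h1 : 0 ≤ (j + s) * h := by positivity
    have h2 : (j + s) * h ≤ π / 2 := by nlinarith
    rw [cot_eq_cos_div_sin]
    exact div_nonneg (cos_nonneg_of_mem_Icc ⟨by linarith [pi_pos], h2⟩)
      (sin_nonneg_of_nonneg_of_le_pi h1 (by linarith))
  · rw [← Finset.sum_range_add_sum_Ico _ hpn]
    refine add_le_of_nonpos_right (Finset.sum_nonpos fun j hj => ?_)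
    obtain ⟨hj1, hj2⟩ := Finset.mem_Ico.1 hj
    have hj1' : (n : ℝ) ≤ j := by exact_mod_cast hj1
    have hj2' : (j + 1 + 1 : ℝ) ≤ 2 * n := by exact_mod_cast (by omega : j + 1 + 1 ≤ 2 * n)
    have h1 : π / 2 ≤ (j + s) * h := by nlinarith
    have h2 : (j + s) * h ≤ π := by nlinarith
    rw [cot_eq_cos_div_sin]
    exact div_nonpos_of_nonpos_of_nonneg (cos_nonpos_of_pi_div_two_le_of_le h1 (by linarith))
      (sin_nonneg_of_nonneg_of_le_pi (by linarith [pi_pos]) h2)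

section Lagrange

open Polynomial Polynomial.Chebyshev

/-- The polynomial `(X² - 1) U_{n-1}`, which vanishes at the extrema of the Chebyshev polynomial
`T_n`. -/
noncomputable def extremaPoly (n : ℕ) : ℝ[X] := (X ^ 2 - 1) * U ℝ ((n - 1 : ℕ) : ℤ)

theorem degree_extremaPoly {n : ℕ} (hn : 0 < n) : (extremaPoly n).degree = (n + 1 : ℕ) := by
  have : (X ^ 2 - 1 : ℝ[X]).degree = (2 : ℕ) := by
    simpa using degree_X_pow_sub_C (R := ℝ) (n := 2) (by norm_num) 1
  rw [extremaPoly, degree_mul, this, degree_U_natCast, ← Nat.cast_add]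
  congr 1
  omega

theorem eval_extremaPoly_cos {n : ℕ} (hn : 0 < n) (θ : ℝ) :
    (extremaPoly n).eval (cos θ) = -(sin θ * sin (n * θ)) := by
  have := U_real_cos θ ((n - 1 : ℕ) : ℤ)
  push_cast [Nat.cast_sub (show 1 ≤ n from hn)] at this
  rw [sub_add_cancel] at this
  simp only [extremaPoly, eval_mul, eval_sub, eval_pow, eval_X, eval_one]
  rw [← this, Nat.cast_sub (show 1 ≤ n from hn), Nat.cast_one]
  linear_combination eval (cos θ) (U ℝ ((n : ℤ) - 1)) * sin_sq_add_cos_sq θ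

theorem eval_derivative_extremaPoly {n : ℕ} (hn : 0 < n) (x : ℝ) :
    (derivative (extremaPoly n)).eval x =
      x * (U ℝ ((n - 1 : ℕ) : ℤ)).eval x + n * (T ℝ n).eval x := by
  have h := congr_arg (eval x) (add_one_mul_T_eq_poly_in_U (R := ℝ) ((n - 1 : ℕ) : ℤ))
  have e : (((n - 1 : ℕ) : ℤ) + 1) = n := by omega
  have e' : ((n - 1 : ℕ) : ℝ) + 1 = n := by exact_mod_cast e
  rw [e] at h
  simp only [eval_mul, eval_sub, eval_add, eval_pow, eval_X, eval_one, eval_natCast,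
    Int.cast_natCast, e'] at h
  rw [h, extremaPoly]
  simp
  ring

theorem abs_eval_derivative_extremaPoly {n k : ℕ} (hn : 0 < n) (hk : k ≤ n) :
    |(derivative (extremaPoly n)).eval (-cos (π * k / n))| =
      n / (if k = 0 ∨ k = n then 1 / 2 else 1) := by
  have hn' : (0 : ℝ) < n := by exact_mod_cast hn
  have hU : ((n - 1 : ℕ) : ℝ) + 1 = n := by exact_mod_cast (by omega : n - 1 + 1 = n)
  rw [eval_derivative_extremaPoly hn]
  rcases Nat.eq_zero_or_pos k with rfl | hk0
  · obtain ⟨m, rfl⟩ : ∃ m, n = m + 1 := ⟨n - 1, by omega⟩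
    simp only [Nat.cast_zero, mul_zero, zero_div, cos_zero, true_or, if_true, U_eval_neg_one,
      T_eval_neg_one, Nat.add_sub_cancel]
    push_cast
    rw [Int.negOnePow_succ]
    push_cast
    have : |(((m : ℤ).negOnePow : ℤ) : ℝ)| = 1 := by
      rcases Int.even_or_odd (m : ℤ) with h | h
      · simp [Int.negOnePow_even _ h]
      · simp [Int.negOnePow_odd _ h]
    rw [show -1 * ((((m : ℤ).negOnePow : ℤ) : ℝ) * (m + 1)) +
      (m + 1) * -(((m : ℤ).negOnePow : ℤ) : ℝ) =
      -((((m : ℤ).negOnePow : ℤ) : ℝ) * (2 * (m + 1))) by ring, abs_neg, abs_mul, this,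
      abs_of_pos (by positivity)]
    ring
  rcases hk.eq_or_lt with rfl | hkn
  · rw [mul_div_cancel_right₀ _ hn'.ne', cos_pi, neg_neg, U_eval_one, T_eval_one]
    simp only [or_true, if_true, Int.cast_natCast, hU]
    rw [abs_of_pos (by positivity)]
    ring
  · have hk' : (0 : ℝ) < k := by exact_mod_cast hk0
    have hkn' : (k : ℝ) < n := by exact_mod_cast hkn
    have hs : 0 < sin (π * k / n) := by
      apply sin_pos_of_pos_of_lt_pi (by positivity)
      rw [div_lt_iff₀ hn']
      have := pi_pos
      gcongr
    have e : (n : ℝ) * (π * k / n + π) = (k + n : ℕ) * π := by push_cast; field_simp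
    have hU0 : (U ℝ ((n - 1 : ℕ) : ℤ)).eval (-cos (π * k / n)) = 0 := by
      have := U_real_cos (π * k / n + π) ((n - 1 : ℕ) : ℤ)
      rw [Int.cast_natCast, hU, e, sin_nat_mul_pi, cos_add_pi, sin_add_pi] at this
      simpa [hs.ne'] using this
    have hT : (T ℝ n).eval (-cos (π * k / n)) = (-1) ^ (k + n) := by
      rw [← cos_add_pi, T_real_cos, Int.cast_natCast, e, cos_nat_mul_pi]
    rw [hU0, hT, if_neg (by omega)]
    simp [abs_mul]

theorem extremaPoly_eq_C_mul_nodal {n : ℕ} (hn : 0 < n) {v : Fin (n + 1) → ℝ}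
    (hv : ∀ j, v j = -cos (π * (j : ℕ) / n)) (hinj : Function.Injective v) :
    extremaPoly n = C (extremaPoly n).leadingCoeff * Lagrange.nodal Finset.univ v := by
  have hn' : (0 : ℝ) < n := by exact_mod_cast hn
  have h0 : (extremaPoly n).leadingCoeff ≠ 0 := by
    rw [Ne, leadingCoeff_eq_zero, ← degree_eq_bot, degree_extremaPoly hn]
    exact WithBot.coe_ne_bot
  refine Polynomial.eq_of_degree_le_of_eval_index_eq Finset.univ hinj.injOn ?_ ?_ ?_ ?_
  · simp [degree_extremaPoly hn]
  · rw [degree_C_mul h0, Lagrange.degree_nodal, degree_extremaPoly hn]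
    simp
  · rw [leadingCoeff_mul, leadingCoeff_C, Lagrange.nodal_monic.leadingCoeff, mul_one]
  · intro i _
    rw [eval_mul, Lagrange.eval_nodal_at_node (Finset.mem_univ i), mul_zero, hv, ← cos_add_pi,
      eval_extremaPoly_cos hn]
    have e : (n : ℝ) * (π * (i : ℕ) / n + π) = (i + n : ℕ) * π := by push_cast; field_simp
    rw [e, sin_nat_mul_pi]
    simp

theorem abs_eval_basis_eq {n : ℕ} (hn : 0 < n) {v : Fin (n + 1) → ℝ}
    (hv : ∀ j, v j = -cos (π * (j : ℕ) / n)) (hinj : Function.Injective v) {θ : ℝ}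
    (k : Fin (n + 1)) (hk : -cos θ ≠ v k) :
    |(Lagrange.basis Finset.univ v k).eval (-cos θ)| =
      |sin (n * θ)| / n * ((if (k : ℕ) = 0 ∨ (k : ℕ) = n then 1 / 2 else 1) *
        (|sin θ| / |cos (π * (k : ℕ) / n) - cos θ|)) := by
  have hq := extremaPoly_eq_C_mul_nodal hn hv hinj
  have hn' : (0 : ℝ) < n := by exact_mod_cast hn
  set c := (extremaPoly n).leadingCoeff with hc
  have hx : |(extremaPoly n).eval (-cos θ)| = |sin θ| * |sin (n * θ)| := by
    rw [← cos_add_pi, eval_extremaPoly_cos hn, sin_add_pi, mul_add, sin_add_nat_mul_pi]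
    simp [abs_mul]
  have hd := abs_eval_derivative_extremaPoly hn (Nat.lt_succ_iff.1 k.2)
  rw [← hv] at hd
  rw [Lagrange.eval_basis_not_at_node (Finset.mem_univ k) hk,
    Lagrange.nodalWeight_eq_eval_derivative_nodal (Finset.mem_univ k)]
  have hqx : (extremaPoly n).eval (-cos θ) = c * (Lagrange.nodal Finset.univ v).eval (-cos θ) := by
    conv_lhs => rw [hq]
    simp
  have hqd : (derivative (extremaPoly n)).eval (v k) =
      c * (derivative (Lagrange.nodal Finset.univ v)).eval (v k) := by
    conv_lhs => rw [hq]
    simp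
  rw [hqx, abs_mul] at hx
  rw [hqd, abs_mul] at hd
  set w : ℝ := if (k : ℕ) = 0 ∨ (k : ℕ) = n then 1 / 2 else 1 with hw
  have hw0 : 0 < w := by rw [hw]; split_ifs <;> norm_num
  have hdp : 0 < |c| * |(derivative (Lagrange.nodal Finset.univ v)).eval (v k)| := by
    rw [hd]; positivity
  have hd0 : |(derivative (Lagrange.nodal Finset.univ v)).eval (v k)| ≠ 0 :=
    right_ne_zero_of_mul hdp.ne'
  have hc0 : |c| ≠ 0 := left_ne_zero_of_mul hdp.ne'
  have hsub : |-cos θ - v k| = |cos (π * (k : ℕ) / n) - cos θ| := by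
    rw [hv]; congr 1; ring
  rw [abs_mul, abs_mul, abs_inv, abs_inv, hsub]
  calc _ = (|c| * |(Lagrange.nodal Finset.univ v).eval (-cos θ)|) /
        (|c| * |(derivative (Lagrange.nodal Finset.univ v)).eval (v k)|) *
        |cos (π * (k : ℕ) / n) - cos θ|⁻¹ := by field_simp
    _ = _ := by
      rw [hx, hd]
      field_simp

end Lagrange

theorem sum_weight_mul_div_cos_sub_cos_le {n p : ℕ} {h s : ℝ} (hnh : n * h = π / 2)
    (hs : s ∈ Set.Ioo 0 1) (hp : p < n) :
    ∑ k ∈ Finset.range (n + 1), (if k = 0 ∨ k = n then 1 / 2 else 1) *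
      (sin (2 * (p + s) * h) / |cos (2 * k * h) - cos (2 * (p + s) * h)|) ≤
    1 / 2 * ∑ j ∈ Finset.range n, (cot ((j + s) * h) + cot ((j + (1 - s)) * h)) := by
  have hn' : (0 : ℝ) < n := by exact_mod_cast (by omega : 0 < n)
  have hp' : (p + 1 : ℝ) ≤ n := by exact_mod_cast hp
  have h0 : 0 < h := by
    by_contra! hc
    nlinarith [pi_pos]
  have hs' : 1 - s ∈ Set.Ioo (0 : ℝ) 1 := ⟨by linarith [hs.2], by linarith [hs.1]⟩
  obtain ⟨r, rfl⟩ : ∃ r, n = p + 1 + r := ⟨n - (p + 1), by omega⟩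
  have hr : (p : ℝ) + 1 + r = (p + 1 + r : ℕ) := by push_cast; ring
  have A := sum_range_div_cos_sub_cos_eq h0 hs.1 p (by nlinarith [hs.2])
  have B := sum_range_div_cos_sub_cos_eq h0 hs'.1 r (by nlinarith [hs.1, p.cast_nonneg (α := ℝ)])
  have A' := sum_range_cot_le hnh hs hp
  have B' := sum_range_cot_le (p := r) hnh hs' (by omega)
  rw [add_assoc (p + 1), Finset.sum_range_add, Finset.sum_add_distrib, mul_add (1 / 2 : ℝ)]
  refine add_le_add (le_trans (le_of_eq ?_) (A.le.trans (by gcongr)))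
    (le_trans (le_of_eq ?_) (B.le.trans (by gcongr)))
  · refine Finset.sum_congr rfl fun k hk => ?_
    have := Finset.mem_range.1 hk
    simp only [show k ≠ p + 1 + r by omega, or_false]
  · rw [← Finset.sum_range_reflect]
    refine Finset.sum_congr rfl fun k hk => ?_
    have hk := Finset.mem_range.1 hk
    have e0 : p + 1 + (r + 1 - 1 - k) = p + 1 + r - k := by omega
    have e1 : ((p + 1 + r - k : ℕ) : ℝ) = (p + 1 + r : ℕ) - k := Nat.cast_sub (by omega)
    have e2 : 2 * ((p + 1 + r : ℕ) - k) * h = π - 2 * k * h := by linear_combination 2 * hnh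
    have e3 : 2 * (p + s) * h = π - 2 * (r + (1 - s)) * h := by
      rw [← hr] at hnh
      linear_combination 2 * hnh
    rw [e0, e1, e2, e3, sin_pi_sub, cos_pi_sub, cos_pi_sub, neg_sub_neg, abs_sub_comm]
    congr 1
    simp only [show p + 1 + r - k ≠ 0 by omega, false_or,
      show p + 1 + r - k = p + 1 + r ↔ k = 0 by omega]

/-- The Lebesgue constant for polynomial interpolation at the `m ≥ 2` Clenshaw–Curtis
points `x_j = -cos(π (j-1)/(m-1))` satisfies `Λ_m ≤ (2/π) log(m-1) + 1`, i.e. the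
Lebesgue function `Σ_j |l_j(x)|` is bounded by `(2/π) log(m-1) + 1` on `[-1,1]`. -/
theorem stmt15 (m : ℕ) (hm : 2 ≤ m)
    (nodes : Fin m → ℝ)
    (hnodes : ∀ j : Fin m, nodes j = -Real.cos (Real.pi * (j : ℕ) / (m - 1 : ℕ))) :
    ∀ x ∈ Set.Icc (-1 : ℝ) 1,
      ∑ j : Fin m, |(Lagrange.basis Finset.univ nodes j).eval x| ≤
        (2 / Real.pi) * Real.log (m - 1 : ℕ) + 1 := by
  intro x hx
  obtain ⟨n, rfl⟩ : ∃ n, m = n + 1 := ⟨m - 1, by omega⟩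
  have hn : 0 < n := by omega
  have hn' : (1 : ℝ) ≤ n := by exact_mod_cast hn
  simp only [Nat.add_sub_cancel] at hnodes ⊢
  have hmem (j : Fin (n + 1)) : π * (j : ℕ) / n ∈ Set.Icc 0 π := by
    have : ((j : ℕ) : ℝ) ≤ n := by exact_mod_cast Nat.lt_succ_iff.1 j.2
    refine ⟨by positivity, ?_⟩
    rw [div_le_iff₀ (by positivity)]
    gcongr
  have hinj : Function.Injective nodes := by
    intro i j hij
    rw [hnodes, hnodes, neg_inj] at hij
    have := injOn_cos (hmem i) (hmem j) hij
    field_simp at this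
    exact Fin.ext (by exact_mod_cast this)
  by_cases hnode : ∃ i, x = nodes i
  · obtain ⟨i, rfl⟩ := hnode
    rw [Finset.sum_eq_single i
      (fun j _ hj => by rw [Lagrange.eval_basis_of_ne hj (Finset.mem_univ i), abs_zero])
      (fun h => absurd (Finset.mem_univ i) h),
      Lagrange.eval_basis_self hinj.injOn (Finset.mem_univ i), abs_one]
    have := log_nonneg hn'
    have : 0 ≤ 2 / π * log n := by positivity
    linarith
  push Not at hnode
  set θ := arccos (-x) with hθ
  have hxθ : x = -cos θ := by
    rw [hθ, cos_arccos (by linarith [hx.2]) (by linarith [hx.1]), neg_neg]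
  set h : ℝ := π / (2 * n) with hh
  have hnh : n * h = π / 2 := by rw [hh]; field_simp
  set p := ⌊θ / (2 * h)⌋₊ with hp
  set s := θ / (2 * h) - p with hs
  have hθ0 : 0 ≤ θ := arccos_nonneg _
  have hh0 : 0 < h := by positivity
  have hθs : θ = 2 * (p + s) * h := by rw [hs]; field_simp; ring
  have hfl := Nat.floor_le (show 0 ≤ θ / (2 * h) by positivity)
  have hfl' := Nat.lt_floor_add_one (θ / (2 * h))
  have hpn : p ≤ n := by
    apply Nat.floor_le_of_le
    rw [div_le_iff₀ (by positivity)]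
    linarith [arccos_le_pi (-x)]
  have hs0 : s ≠ 0 := by
    intro hs0
    apply hnode ⟨p, by omega⟩
    refine hxθ.trans ?_
    rw [hnodes, hθs, hs0, hh]
    congr 2
    simp only
    field_simp
    ring
  have hsI : s ∈ Set.Ioo (0 : ℝ) 1 :=
    ⟨lt_of_le_of_ne (by rw [hs]; linarith) hs0.symm, by rw [hs]; linarith⟩
  have hpn' : p < n := by
    refine lt_of_le_of_ne hpn fun hpn => ?_
    have : θ ≤ π := arccos_le_pi _
    rw [hθs, hpn] at this
    nlinarith [hsI.1]
  have hsinθ : |sin θ| = sin (2 * (p + s) * h) := by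
    rw [hθs.symm, abs_of_nonneg (sin_nonneg_of_nonneg_of_le_pi hθ0 (arccos_le_pi _))]
  have hsinn : |sin (n * θ)| = sin (s * π) := by
    have e : n * θ = s * π + p * π := by
      rw [hθs]
      linear_combination 2 * (p + s) * hnh
    rw [e, sin_add_nat_mul_pi, abs_mul, abs_pow, abs_neg, abs_one, one_pow, one_mul, abs_of_nonneg]
    exact sin_nonneg_of_nonneg_of_le_pi (mul_nonneg hsI.1.le pi_pos.le)
      (by nlinarith [pi_pos, hsI.2])
  have hsn0 : 0 ≤ sin (s * π) := hsinn ▸ abs_nonneg _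
  have hterm (k : Fin (n + 1)) : |(Lagrange.basis Finset.univ nodes k).eval x| =
      sin (s * π) / n * ((if (k : ℕ) = 0 ∨ (k : ℕ) = n then 1 / 2 else 1) *
        (sin (2 * (p + s) * h) / |cos (2 * (k : ℕ) * h) - cos (2 * (p + s) * h)|)) := by
    have e : π * (k : ℕ) / n = 2 * (k : ℕ) * h := by rw [hh]; field_simp
    rw [hxθ, abs_eval_basis_eq hn hnodes hinj k (hxθ ▸ hnode k), hsinn, hsinθ, e, ← hθs]
  rw [Finset.sum_congr rfl fun k _ => hterm k, ← Finset.mul_sum,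
    Fin.sum_univ_eq_sum_range (fun k : ℕ => (if k = 0 ∨ k = n then 1 / 2 else 1) *
        (sin (2 * (p + s) * h) / |cos (2 * k * h) - cos (2 * (p + s) * h)|)) (n + 1)]
  calc _ ≤ sin (s * π) / n * (1 / 2 * ∑ j ∈ Finset.range n,
        (cot ((j + s) * h) + cot ((j + (1 - s)) * h))) := by
        gcongr
        exact sum_weight_mul_div_cos_sub_cos_le hnh hsI hpn'
    _ = 1 / n * ∑ j ∈ Finset.range n,
        sin (s * π) / 2 * (cot ((j + s) * h) + cot ((j + (1 - s)) * h)) := by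
        rw [← Finset.mul_sum]; ring
    _ ≤ 1 / n * ∑ j ∈ Finset.range n, cot ((2 * j + 1) * h / 2) := by
        gcongr with j hj
        exact sin_mul_cot_add_cot_le hnh (Finset.mem_range.1 hj) hsI
    _ ≤ _ := sum_cot_le n hn
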